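/- Let P ⊂ ℝ^n be an n-dimensional lattice polytope such that all n complex roots of its Ehrhart polynomial L_P have real part equal to -1/2. Then ℓ_i(P) ≤ 2^i · binom(n,i) for all i = 0, …, n; that is, the inequalities of Wills' conjecture hold for P. -/

import Mathlib

open MeasureTheory Polynomial Pointwise

/-- The number of integer lattice points contained in a subset of `ℝ^n`. -/
noncomputable def latticePointCount {n : ℕ} (S : Set (Fin n → ℝ)) : ℕ :=
  {v : Fin n → ℤ | (fun i => (v i : ℝ)) ∈ S}.ncard

/-- A lattice polytope in `ℝ^n`: the convex hull of finitely many integer points. -/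
def IsLatticePolytope {n : ℕ} (P : Set (Fin n → ℝ)) : Prop :=
  ∃ V : Finset (Fin n → ℤ),
    P = convexHull ℝ ((fun v : Fin n → ℤ => fun i => (v i : ℝ)) '' (V : Set (Fin n → ℤ)))

/-- `L` is the Ehrhart polynomial of `P`: for every positive integer `k` its value at `k`
is the number of lattice points of the dilate `kP`. -/
def IsEhrhartPoly {n : ℕ} (P : Set (Fin n → ℝ)) (L : Polynomial ℝ) : Prop :=
  ∀ k : ℕ, 0 < k → L.eval (k : ℝ) = latticePointCount ((k : ℝ) • P)

/-!
The Ehrhart polynomial has constant term `1` and, since its roots have real part `-1/2`, no root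
of modulus less than `1/2`. Hence its reverse is monic with all roots of modulus at most `2`, and
Vieta's formulas bound its coefficients by those of `(X + 2) ^ n`.

That the constant term is `1` amounts to the counting function `k ↦ #(kP ∩ ℤⁿ)` being polynomial
down to `k = 0`. Let `v₁, …, vₘ` be the vertices. For `c ≥ m` and fixed `x`, consider the polytope
of weights `w ≥ 0` with `∑ wᵢ = c` and `∑ wᵢ vᵢ = x`. Some `wᵢ ≥ 1` by pigeonhole, so its subsets
`K_S` cut out by `wᵢ ≥ 1` for `i ∈ S` satisfy `∑_S (-1)^|S| [w ∈ K_S] = 0` by inclusion–exclusion.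
The Euler characteristic respects such relations between compact convex sets, and `K_S` is nonempty
exactly when `x ∈ ∑_{i ∈ S} vᵢ + (c - |S|) P`. Counting lattice points `x` shows that the `m`-th
difference of `k ↦ #(kP ∩ ℤⁿ)` vanishes on all of `ℕ`.
-/

open scoped Finset

section EulerCharacteristic

variable {ι A : Type*} [AddCommGroup A] {s : Finset ι} {a : ι → A}

open scoped Classical in
theorem sum_eq_zero_of_forall_sum_filter_mem_Icc_eq_zero {α : Type*} [LinearOrder α]
    [DenselyOrdered α] [NoMinOrder α] [NoMaxOrder α] {l r : ι → α} (hlr : ∀ j ∈ s, l j ≤ r j)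
    (h : ∀ t, ∑ j ∈ s with t ∈ Set.Icc (l j) (r j), a j = 0) :
    ∑ j ∈ s, a j = 0 := by
  have sum_left_eq (t : α) : ∑ j ∈ s with l j = t, a j = 0 := by
    -- Just to the left of `t`, exactly the intervals starting at `t` have been lost.
    obtain ⟨x, hx, hxt⟩ : ∃ x, (∀ y ∈ (s.image l ∪ s.image r).filter (· < t), y < x) ∧
        ∀ y ∈ ({t} : Finset α), x < y :=
      have : Nonempty α := ⟨t⟩
      Order.exists_between_finsets _ _ (by simp +contextual)
    replace hxt : x < t := hxt t (Finset.mem_singleton_self t)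
    have hsplit : {j ∈ s | t ∈ Set.Icc (l j) (r j)} =
        {j ∈ s | l j = t} ∪ {j ∈ s | x ∈ Set.Icc (l j) (r j)} := by
      ext j
      have hl (hj : j ∈ s) : l j < t → l j < x := fun hlt ↦ hx _ (by grind)
      have hr (hj : j ∈ s) : r j < t → r j < x := fun hrt ↦ hx _ (by grind)
      grind
    have hdisj : Disjoint ({j ∈ s | l j = t}) ({j ∈ s | x ∈ Set.Icc (l j) (r j)}) :=
      Finset.disjoint_filter.2 fun j _ hj hxj ↦ by grind
    have ht := h t
    rwa [hsplit, Finset.sum_union hdisj, h x, add_zero] at ht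
  rw [← Finset.sum_fiberwise_of_maps_to fun j hj ↦ Finset.mem_image_of_mem l hj]
  exact Finset.sum_eq_zero fun t _ ↦ sum_left_eq t

open scoped Classical in
theorem sum_filter_nonempty_eq_zero_of_fibers {X : Type*} [TopologicalSpace X] {f : X → ℝ}
    (hf : Continuous f) {K : ι → Set X} (hK : ∀ j ∈ s, IsCompact (K j))
    (hconn : ∀ j ∈ s, IsPreconnected (K j))
    (h : ∀ t, ∑ j ∈ s with (K j ∩ f ⁻¹' {t}).Nonempty, a j = 0) :
    ∑ j ∈ s with (K j).Nonempty, a j = 0 := by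
  have hIcc (j) (hj : j ∈ s.filter fun j ↦ (K j).Nonempty) :
      f '' K j = Set.Icc (sInf (f '' K j)) (sSup (f '' K j)) := by
    obtain ⟨hj, hne⟩ := Finset.mem_filter.1 hj
    exact eq_Icc_of_connected_compact
      ⟨hne.image f, (hconn j hj).image f hf.continuousOn⟩ ((hK j hj).image hf)
  refine sum_eq_zero_of_forall_sum_filter_mem_Icc_eq_zero
    (fun j hj ↦ Set.nonempty_Icc.1 (hIcc j hj ▸ (Finset.mem_filter.1 hj).2.image f)) fun t ↦ ?_
  rw [← h t, Finset.filter_congr fun j hj ↦ by rw [← hIcc j hj], Finset.filter_filter]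
  congr! 2 with j
  rw [← Set.image_inter_nonempty_iff, Set.inter_singleton_nonempty, and_iff_right_of_imp]
  exact fun ht ↦ Set.image_nonempty.1 ⟨t, ht⟩

open scoped Classical in
theorem sum_filter_nonempty_eq_zero {E : Type*} [AddCommGroup E] [Module ℝ E] [TopologicalSpace E]
    [IsTopologicalAddGroup E] [ContinuousSMul ℝ E] [T2Space E] [FiniteDimensional ℝ E]
    {K : ι → Set E} (hK : ∀ j ∈ s, IsCompact (K j)) (hconv : ∀ j ∈ s, Convex ℝ (K j))
    (h : ∀ x, ∑ j ∈ s with x ∈ K j, a j = 0) :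
    ∑ j ∈ s with (K j).Nonempty, a j = 0 := by
  let b := Module.finBasis ℝ E
  have hcont (i) : Continuous (b.coord i) := (b.coord i).continuous_of_finiteDimensional
  -- Release the coordinates one at a time, starting from points.
  suffices H : ∀ (T : Finset _) (c : _ → ℝ),
      ∑ j ∈ s with (K j ∩ {x | ∀ i ∉ T, b.coord i x = c i}).Nonempty, a j = 0 by
    simpa using H Finset.univ 0
  intro T
  induction T using Finset.induction_on with
  | empty =>
    intro c
    have hpoint : {x | ∀ i ∉ (∅ : Finset _), b.coord i x = c i} = {b.equivFun.symm c} := by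
      ext x
      simp only [Set.mem_singleton_iff, LinearEquiv.eq_symm_apply, funext_iff]
      simp
    simpa only [hpoint, Set.inter_singleton_nonempty] using h (b.equivFun.symm c)
  | insert i T hi ih =>
    intro c
    have hclosed : IsClosed {x | ∀ k ∉ insert i T, b.coord k x = c k} := by
      simp only [Set.ofPred_forall]
      exact isClosed_iInter fun k ↦ isClosed_iInter fun _ ↦
        isClosed_eq (hcont k) continuous_const
    have hconvex : Convex ℝ {x | ∀ k ∉ insert i T, b.coord k x = c k} := by
      simp only [Set.ofPred_forall]
      exact convex_iInter fun k ↦ convex_iInter fun _ ↦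
        convex_hyperplane (b.coord k).isLinear (c k)
    refine sum_filter_nonempty_eq_zero_of_fibers (hcont i)
      (fun j hj ↦ (hK j hj).inter_right hclosed)
      (fun j hj ↦ ((hconv j hj).inter hconvex).isPreconnected) fun t ↦ ?_
    have hslice : {x | ∀ k ∉ insert i T, b.coord k x = c k} ∩ b.coord i ⁻¹' {t} =
        {x | ∀ k ∉ T, b.coord k x = Function.update c i t k} := by
      ext x
      simp only [Set.mem_inter_iff, Set.mem_ofPred_eq, Set.mem_preimage, Set.mem_singleton_iff]
      grind
    simpa only [Set.inter_assoc, hslice] using ih (Function.update c i t)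

end EulerCharacteristic

section WeightPolytope

theorem convexHull_range_eq_image_stdSimplex {R ι E : Type*} [Field R] [LinearOrder R]
    [IsStrictOrderedRing R] [Fintype ι] [AddCommGroup E] [Module R E] (v : ι → E) :
    convexHull R (Set.range v) = Fintype.linearCombination R v '' stdSimplex R ι := by
  classical
  rw [← convexHull_basis_eq_stdSimplex, LinearMap.image_convexHull, ← Set.range_comp]
  congr 2 with i
  simp [Fintype.linearCombination_apply]

theorem mem_smul_convexHull_range {R ι E : Type*} [Field R] [LinearOrder R]
    [IsStrictOrderedRing R] [Fintype ι] [Nonempty ι] [AddCommGroup E] [Module R E] (v : ι → E)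
    {c : R} (hc : 0 ≤ c) {x : E} :
    x ∈ c • convexHull R (Set.range v) ↔
      ∃ w : ι → R, 0 ≤ w ∧ ∑ i, w i = c ∧ ∑ i, w i • v i = x := by
  rcases hc.eq_or_lt with rfl | hc
  · rw [Set.zero_smul_set (convexHull_nonempty_iff.2 (Set.range_nonempty v)), Set.mem_zero]
    constructor
    · rintro rfl
      exact ⟨0, by simp⟩
    · rintro ⟨w, hw, hsum, rfl⟩
      have := (Fintype.sum_eq_zero_iff_of_nonneg hw).1 hsum
      simp [this]
  · rw [convexHull_range_eq_image_stdSimplex]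
    constructor
    · rintro ⟨_, ⟨w, ⟨hw, hsum⟩, rfl⟩, rfl⟩
      exact ⟨c • w, smul_nonneg hc.le hw, by simp [← Finset.mul_sum, hsum],
        by simp [Fintype.linearCombination_apply, Finset.smul_sum, mul_smul]⟩
    · rintro ⟨w, hw, hsum, rfl⟩
      refine ⟨_, ⟨c⁻¹ • w, ⟨smul_nonneg (inv_nonneg.2 hc.le) hw, ?_⟩, rfl⟩, ?_⟩
      · simp [← Finset.mul_sum, hsum, hc.ne']
      · simp [Fintype.linearCombination_apply, hc.ne']

theorem isClosed_linearMap_preimage_singleton {E F : Type*} [AddCommGroup E] [Module ℝ E]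
    [TopologicalSpace E] [IsTopologicalAddGroup E] [ContinuousSMul ℝ E] [T2Space E]
    [FiniteDimensional ℝ E] [AddCommGroup F] [Module ℝ F] (f : E →ₗ[ℝ] F) (y : F) :
    IsClosed (f ⁻¹' {y}) := by
  rcases (f ⁻¹' {y}).eq_empty_or_nonempty with hempty | ⟨x₀, rfl⟩
  · simp [hempty]
  · have htranslate : f ⁻¹' {f x₀} = (· - x₀) ⁻¹' (LinearMap.ker f : Set E) := by
      ext x
      simp [sub_eq_zero]
    rw [htranslate]
    exact (Submodule.closed_of_finiteDimensional _).preimage (continuous_sub_right x₀)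

variable {ι E : Type*} [Fintype ι] [AddCommGroup E] [Module ℝ E]

/-- The polytope of nonnegative weights of total mass `c` which represent `x` as a combination of
the points `v i` and are at least `1` on `S`. Membership in `S` is encoded as a lower bound by the
indicator of `S`, so that removing the indicator turns the weights into arbitrary nonnegative
ones. -/
def weightPolytope (v : ι → E) (c : ℝ) (x : E) (S : Finset ι) : Set (ι → ℝ) :=
  {w | (S : Set ι).indicator 1 ≤ w ∧ ∑ i, w i = c ∧ ∑ i, w i • v i = x}

variable (v : ι → E) {c : ℝ} (x : E) (S : Finset ι)

theorem weightPolytope_eq_inter :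
    weightPolytope v c x S = Set.Ici ((S : Set ι).indicator 1) ∩
      Fintype.linearCombination ℝ (fun _ ↦ (1 : ℝ)) ⁻¹' {c} ∩
      Fintype.linearCombination ℝ v ⁻¹' {x} := by
  ext w
  simp [weightPolytope, Fintype.linearCombination_apply, and_assoc]

theorem convex_weightPolytope : Convex ℝ (weightPolytope v c x S) := by
  rw [weightPolytope_eq_inter]
  exact ((convex_Ici _).inter ((convex_singleton c).linear_preimage _)).inter
    ((convex_singleton x).linear_preimage _)

theorem isCompact_weightPolytope : IsCompact (weightPolytope v c x S) := by
  refine (isCompact_Icc (a := (0 : ι → ℝ)) (b := fun _ ↦ c)).of_isClosed_subset ?_ ?_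
  · rw [weightPolytope_eq_inter]
    exact (isClosed_Ici.inter (isClosed_linearMap_preimage_singleton _ c)).inter
      (isClosed_linearMap_preimage_singleton _ x)
  · rintro w ⟨hw, rfl, -⟩
    have hw0 : 0 ≤ w := le_trans (Set.indicator_nonneg fun _ _ ↦ zero_le_one) hw
    exact ⟨hw0, fun i ↦ Finset.single_le_sum (fun k _ ↦ hw0 k) (Finset.mem_univ i)⟩

variable {x S} in
theorem mem_weightPolytope_iff_subset {w : ι → ℝ} (hw : w ∈ weightPolytope v c x ∅) :
    w ∈ weightPolytope v c x S ↔ S ⊆ ({i | 1 ≤ w i} : Finset ι) := by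
  obtain ⟨hw0, hc, hx⟩ := hw
  simp only [weightPolytope, Set.mem_ofPred_eq, hc, hx, and_true, Pi.le_def, Finset.subset_iff,
    Finset.mem_filter_univ]
  refine forall_congr' fun i ↦ ?_
  have := hw0 i
  by_cases hi : i ∈ S <;> simp_all

variable {x S} in
theorem weightPolytope_subset_empty : weightPolytope v c x S ⊆ weightPolytope v c x ∅ := by
  rintro w ⟨hw, hc, hx⟩
  exact ⟨(Set.indicator_le_indicator_of_subset (by simp) fun _ ↦ zero_le_one).trans hw, hc, hx⟩

variable {x S} in
theorem weightPolytope_nonempty_iff [Nonempty ι] (hS : #S ≤ c) :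
    (weightPolytope v c x S).Nonempty ↔
      x ∈ (∑ i ∈ S, v i) +ᵥ (c - #S) • convexHull ℝ (Set.range v) := by
  classical
  have hcard : ∑ i, (S : Set ι).indicator (1 : ι → ℝ) i = #S := by simp [Set.indicator_apply]
  have hsum : ∑ i, (S : Set ι).indicator (1 : ι → ℝ) i • v i = ∑ i ∈ S, v i := by
    simp [Set.indicator_apply, ite_smul]
  rw [Set.mem_vadd_set_iff_neg_vadd_mem, mem_smul_convexHull_range v (sub_nonneg.2 hS)]
  constructor
  · rintro ⟨w, hw, hc, rfl⟩
    refine ⟨w - (S : Set ι).indicator 1, sub_nonneg.2 hw, ?_, ?_⟩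
    · simp only [Pi.sub_apply, Finset.sum_sub_distrib, hc, hcard]
    · simp only [Pi.sub_apply, sub_smul, Finset.sum_sub_distrib, hsum, vadd_eq_add]
      abel
  · rintro ⟨w, hw, hc, hx⟩
    refine ⟨w + (S : Set ι).indicator 1, le_add_of_nonneg_left hw, ?_, ?_⟩
    · simp only [Pi.add_apply, Finset.sum_add_distrib, hc, hcard, sub_add_cancel]
    · simp only [Pi.add_apply, add_smul, Finset.sum_add_distrib, hsum, hx, vadd_eq_add]
      abel

open scoped Classical in
theorem sum_filter_mem_weightPolytope_eq_zero [Nonempty ι] (hc : Fintype.card ι ≤ c)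
    (w : ι → ℝ) : ∑ S : Finset ι with w ∈ weightPolytope v c x S, (-1 : ℤ) ^ #S = 0 := by
  by_cases hw : w ∈ weightPolytope v c x ∅
  · obtain ⟨i, -, hi⟩ : ∃ i ∈ Finset.univ, 1 ≤ w i :=
      Finset.exists_le_of_sum_le Finset.univ_nonempty (by simpa [hw.2.1] using hc)
    have hfilter : Finset.univ.filter (w ∈ weightPolytope v c x ·) =
        Finset.powerset {i | 1 ≤ w i} := by
      ext S
      rw [Finset.mem_filter_univ, Finset.mem_powerset, mem_weightPolytope_iff_subset v hw]
    rw [hfilter]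
    exact Finset.sum_powerset_neg_one_pow_card_of_nonempty ⟨i, by simpa using hi⟩
  · rw [Finset.filter_false_of_mem fun S _ hS ↦ hw (weightPolytope_subset_empty v hS),
      Finset.sum_empty]

open scoped Classical in
theorem sum_filter_mem_vadd_smul_convexHull_eq_zero [Nonempty ι] (hc : Fintype.card ι ≤ c) :
    ∑ S : Finset ι with x ∈ (∑ i ∈ S, v i) +ᵥ (c - #S) • convexHull ℝ (Set.range v),
      (-1 : ℤ) ^ #S = 0 := by
  have hS (S : Finset ι) : #S ≤ c := le_trans (by exact_mod_cast S.card_le_univ) hc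
  simp only [← weightPolytope_nonempty_iff v (hS _)]
  exact sum_filter_nonempty_eq_zero (fun S _ ↦ isCompact_weightPolytope v x S)
    (fun S _ ↦ convex_weightPolytope v x S) (sum_filter_mem_weightPolytope_eq_zero v x hc)

end WeightPolytope

section ForwardDifference

theorem fwdDiff_iter_card_eq_sum_finset {ι M G : Type*} [Fintype ι] [DecidableEq ι]
    [AddCommMonoid M] [AddCommGroup G] (h : M) (f : M → G) (y : M) :
    (fwdDiff h)^[Fintype.card ι] f y = ∑ S : Finset ι, (-1 : ℤ) ^ #S • f (y + #Sᶜ • h) := by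
  rw [fwdDiff_iter_eq_sum_shift, ← Finset.card_univ (α := ι),
    ← Equiv.sum_comp (compl_involutive.toPerm : Equiv.Perm (Finset ι)), ← Finset.powerset_univ]
  simp only [Function.Involutive.coe_toPerm, compl_compl, Finset.card_compl, ← Finset.card_univ]
  rw [Finset.sum_powerset_apply_card fun j ↦ (-1 : ℤ) ^ (#Finset.univ - j) • f (y + j • h)]
  simp only [mul_comm, mul_smul, natCast_zsmul]

theorem fwdDiff_iter_eq_zero_of_le {M G : Type*} [AddCommMonoid M] [AddCommGroup G] {h : M}
    {f : M → G} {m N : ℕ} (hf : (fwdDiff h)^[m] f = 0) (hmN : m ≤ N) :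
    (fwdDiff h)^[N] f = 0 := by
  obtain ⟨k, rfl⟩ := Nat.exists_eq_add_of_le' hmN
  rw [Function.iterate_add_apply, hf]
  exact Function.iterate_fixed (fwdDiff_const h 0) k

theorem apply_zero_eq_of_fwdDiff_iter_eq {G : Type*} [AddCommGroup G] {m : ℕ} {f g : ℕ → G}
    (hfg : (fwdDiff 1)^[m] f = (fwdDiff 1)^[m] g) (h : ∀ k, f (k + 1) = g (k + 1)) :
    f 0 = g 0 := by
  induction m generalizing f g with
  | zero => exact congrFun hfg 0
  | succ m ih => simpa [fwdDiff, h] using ih hfg fun k ↦ by simp [fwdDiff, h]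

theorem fwdDiff_iter_natCast_eval_eq_zero {R : Type*} [CommRing R] {p : R[X]} {m : ℕ}
    (hp : p.natDegree < m) : (fwdDiff 1)^[m] (fun k : ℕ ↦ p.eval (k : R)) = 0 := by
  ext k
  simpa [fwdDiff_iter_eq_sum_shift] using congrFun (fwdDiff_iter_eq_zero_of_degree_lt hp) (k : R)

end ForwardDifference

section LatticePoints

variable {n : ℕ}

theorem finite_setOf_intCast_mem {S : Set (Fin n → ℝ)} (hS : Bornology.IsBounded S) :
    {v : Fin n → ℤ | (fun i ↦ (v i : ℝ)) ∈ S}.Finite := by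
  have hemb : Topology.IsClosedEmbedding (Pi.map fun (_ : Fin n) (k : ℤ) ↦ (k : ℝ)) :=
    .piMap fun _ ↦ Int.isClosedEmbedding_coe_real
  exact (hemb.isCompact_preimage hS.isCompact_closure).finite_of_discrete.subset
    fun _ hv ↦ subset_closure hv

theorem latticePointCount_vadd (u : Fin n → ℤ) (S : Set (Fin n → ℝ)) :
    latticePointCount ((fun i ↦ (u i : ℝ)) +ᵥ S) = latticePointCount S := by
  have htranslate : {y : Fin n → ℤ | (fun i ↦ (y i : ℝ)) ∈ (fun i ↦ (u i : ℝ)) +ᵥ S} =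
      (u + ·) '' {y | (fun i ↦ (y i : ℝ)) ∈ S} := by
    ext y
    simp only [Set.mem_vadd_set_iff_neg_vadd_mem, Set.image_add_left, Set.mem_preimage,
      Set.mem_ofPred_eq]
    congr! 1
    ext i
    simp
  rw [latticePointCount, htranslate, Set.ncard_image_of_injective _ (add_right_injective u),
    latticePointCount]

theorem latticePointCount_zero : latticePointCount (0 : Set (Fin n → ℝ)) = 1 := by
  have horigin : {v : Fin n → ℤ | (fun i ↦ (v i : ℝ)) ∈ (0 : Set (Fin n → ℝ))} = {0} := by
    ext v
    simp [funext_iff]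
  rw [latticePointCount, horigin, Set.ncard_singleton]

open scoped Classical in
theorem sum_latticePointCount_smul_eq_zero {ι A : Type*} [AddCommGroup A] {s : Finset ι}
    {a : ι → A} {Q : ι → Set (Fin n → ℝ)} (hQ : ∀ j ∈ s, Bornology.IsBounded (Q j))
    (h : ∀ x, ∑ j ∈ s with x ∈ Q j, a j = 0) :
    ∑ j ∈ s, latticePointCount (Q j) • a j = 0 := by
  have hfin : {y : Fin n → ℤ | (fun i ↦ (y i : ℝ)) ∈ ⋃ j ∈ s, Q j}.Finite :=
    finite_setOf_intCast_mem ((Bornology.isBounded_biUnion_finset s).2 hQ)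
  have hcount (j) (hj : j ∈ s) : latticePointCount (Q j) =
      #{y ∈ hfin.toFinset | (fun i ↦ ((y i : ℤ) : ℝ)) ∈ Q j} := by
    rw [latticePointCount, ← Set.ncard_coe_finset]
    congr 1 with y
    simpa using fun hy ↦ ⟨j, hj, hy⟩
  calc ∑ j ∈ s, latticePointCount (Q j) • a j
      = ∑ j ∈ s, ∑ y ∈ hfin.toFinset with (fun i ↦ ((y i : ℤ) : ℝ)) ∈ Q j, a j :=
        Finset.sum_congr rfl fun j hj ↦ by rw [hcount j hj, Finset.sum_const]
    _ = ∑ y ∈ hfin.toFinset, ∑ j ∈ s with (fun i ↦ ((y i : ℤ) : ℝ)) ∈ Q j, a j := by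
        simp only [Finset.sum_filter]
        exact Finset.sum_comm
    _ = 0 := Finset.sum_eq_zero fun y _ ↦ h _

theorem fwdDiff_iter_latticePointCount_convexHull_eq_zero {ι : Type*} [Fintype ι] [Nonempty ι]
    (v : ι → Fin n → ℤ) :
    (fwdDiff 1)^[Fintype.card ι] (fun k : ℕ ↦ (latticePointCount
      ((k : ℝ) • convexHull ℝ (Set.range fun j i ↦ (v j i : ℝ))) : ℤ)) = 0 := by
  classical
  set P := convexHull ℝ (Set.range fun j i ↦ (v j i : ℝ))
  have hP : Bornology.IsBounded P := isBounded_convexHull.2 (Set.finite_range _).isBounded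
  ext k
  let c : ℝ := k + Fintype.card ι
  have hscale (S : Finset ι) : ((k + #Sᶜ : ℕ) : ℝ) = c - #S := by
    simp only [c, ← S.card_compl_add_card]
    push_cast
    ring
  have hshift (S : Finset ι) : ∑ j ∈ S, (fun i ↦ (v j i : ℝ)) = fun i ↦ ((∑ j ∈ S, v j) i : ℝ) := by
    ext i
    simp
  have hsum := sum_latticePointCount_smul_eq_zero (s := Finset.univ)
    (Q := fun S : Finset ι ↦ (∑ j ∈ S, fun i ↦ (v j i : ℝ)) +ᵥ (c - #S) • P)
    (fun S _ ↦ (hP.smul₀ _).vadd _)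
    (fun x ↦ sum_filter_mem_vadd_smul_convexHull_eq_zero _ x (le_add_of_nonneg_left k.cast_nonneg))
  rw [fwdDiff_iter_card_eq_sum_finset, Pi.zero_apply, ← hsum]
  refine Finset.sum_congr rfl fun S _ ↦ ?_
  rw [hshift, latticePointCount_vadd, smul_eq_mul, smul_eq_mul, mul_one, hscale,
    nsmul_eq_mul, mul_comm]

theorem IsLatticePolytope.exists_fwdDiff_iter_latticePointCount_eq_zero {P : Set (Fin n → ℝ)}
    (hP : IsLatticePolytope P) (hne : P.Nonempty) :
    ∃ m, (fwdDiff 1)^[m] (fun k : ℕ ↦ (latticePointCount ((k : ℝ) • P) : ℤ)) = 0 := by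
  obtain ⟨V, rfl⟩ := hP
  have : Nonempty V := (Set.image_nonempty.1 (convexHull_nonempty_iff.1 hne)).to_subtype
  refine ⟨Fintype.card V, ?_⟩
  rw [Set.image_eq_range]
  exact fwdDiff_iter_latticePointCount_convexHull_eq_zero fun u : V ↦ (u : Fin n → ℤ)

theorem IsEhrhartPoly.eval_zero {P : Set (Fin n → ℝ)} {L : ℝ[X]} (hL : IsEhrhartPoly P L)
    (hP : IsLatticePolytope P) (hne : P.Nonempty) : L.eval 0 = 1 := by
  obtain ⟨m, hm⟩ := hP.exists_fwdDiff_iter_latticePointCount_eq_zero hne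
  have hcount : (fwdDiff 1)^[m] (fun k : ℕ ↦ (latticePointCount ((k : ℝ) • P) : ℝ)) = 0 := by
    ext k
    have := congrFun hm k
    simp only [fwdDiff_iter_eq_sum_shift, zsmul_eq_mul, Pi.zero_apply] at this ⊢
    exact_mod_cast this
  have hzero := apply_zero_eq_of_fwdDiff_iter_eq (m := L.natDegree + 1 + m)
    ((fwdDiff_iter_eq_zero_of_le (fwdDiff_iter_natCast_eval_eq_zero L.natDegree.lt_succ_self)
      (Nat.le_add_right _ m)).trans (fwdDiff_iter_eq_zero_of_le hcount (Nat.le_add_left m _)).symm)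
    fun k ↦ hL (k + 1) k.succ_pos
  rwa [Nat.cast_zero, Set.zero_smul_set hne, latticePointCount_zero, Nat.cast_one] at hzero

end LatticePoints

theorem inv_mem_roots_of_mem_roots_reverse {K : Type*} [Field K] {p : K[X]} {z : K}
    (hz : z ∈ p.reverse.roots) (hz0 : z ≠ 0) : z⁻¹ ∈ p.roots := by
  obtain ⟨hp, hz⟩ := mem_roots'.1 hz
  let := invertibleOfNonzero (inv_ne_zero hz0)
  refine mem_roots'.2 ⟨reverse_eq_zero.not.1 hp, ?_⟩
  rw [IsRoot, ← eval₂_id, ← eval₂_reverse_eq_zero_iff, invOf_eq_inv, inv_inv, eval₂_id]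
  exact hz

theorem norm_coeff_le_of_le_norm_roots {K : Type*} [NormedField K] [IsAlgClosed K] {p : K[X]}
    {B : ℝ} (hB : 0 < B) (h : ∀ z ∈ p.roots, B⁻¹ ≤ ‖z‖) (i : ℕ) :
    ‖p.coeff i‖ ≤ ‖p.coeff 0‖ * (B ^ i * p.natDegree.choose i) := by
  rcases eq_or_ne p 0 with rfl | hp
  · simp
  have hp0 : p.coeff 0 ≠ 0 := fun h0 ↦ (inv_pos.2 hB).not_ge <| by
    simpa using h 0 (mem_roots'.2 ⟨hp, by rwa [IsRoot, ← coeff_zero_eq_eval_zero]⟩)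
  rcases lt_or_ge p.natDegree i with hi | hi
  · simp [coeff_eq_zero_of_natDegree_lt hi, Nat.choose_eq_zero_of_lt hi]
  have htrail : p.natTrailingDegree = 0 := natTrailingDegree_eq_zero.2 (.inr hp0)
  have hlead : p.reverse.leadingCoeff = p.coeff 0 := by
    rw [reverse_leadingCoeff, trailingCoeff, htrail]
  have hdeg : p.reverse.natDegree = p.natDegree := by rw [reverse_natDegree, htrail, tsub_zero]
  set q := p.reverse * C (p.coeff 0)⁻¹ with hqdef
  have hq : q.Monic := by
    simpa only [hlead] using monic_mul_leadingCoeff_inv (reverse_eq_zero.not.2 hp)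
  have hqdeg : q.natDegree = p.natDegree := by
    rw [natDegree_mul_C (inv_ne_zero hp0), hdeg]
  have hqroots (z) (hz : z ∈ (q.map (.id K)).roots) : ‖z‖ ≤ B := by
    rcases eq_or_ne z 0 with rfl | hz0
    · simpa using hB.le
    rw [map_id, hqdef, mul_comm, roots_C_mul _ (inv_ne_zero hp0)] at hz
    have hinv := h _ (inv_mem_roots_of_mem_roots_reverse hz hz0)
    rwa [norm_inv, inv_le_inv₀ hB (norm_pos_iff.2 hz0)] at hinv
  have hcoeff := coeff_le_of_roots_le (p.natDegree - i) hq (IsAlgClosed.splits _) hqroots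
  rw [map_id, coeff_mul_C, coeff_reverse, revAt_le (Nat.sub_le _ _), hqdeg, Nat.sub_sub_self hi,
    Nat.choose_symm hi, norm_mul, norm_inv, ← div_eq_mul_inv, div_le_iff₀' (norm_pos_iff.2 hp0)]
    at hcoeff
  exact hcoeff

theorem Wills_inequalities_of_roots_real_part_general {n : ℕ} {P : Set (Fin n → ℝ)}
    (hP : IsLatticePolytope P) (hne : P.Nonempty) {L : ℝ[X]} (hL : IsEhrhartPoly P L)
    (hroots : ∀ z ∈ (L.map (algebraMap ℝ ℂ)).roots, 1 / 2 ≤ ‖z‖) (i : ℕ) :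
    |L.coeff i| ≤ 2 ^ i * (L.natDegree.choose i : ℝ) := by
  have hcoeff := norm_coeff_le_of_le_norm_roots (p := L.map (algebraMap ℝ ℂ)) two_pos
    (by simpa only [one_div] using hroots) i
  have hcoeff0 : L.coeff 0 = 1 := by rw [coeff_zero_eq_eval_zero, hL.eval_zero hP hne]
  simpa [hcoeff0] using hcoeff

theorem Wills_inequalities_of_roots_real_part (n : ℕ) (P : Set (Fin n → ℝ))
    (hP : IsLatticePolytope P) (hfull : (interior P).Nonempty)
    (L : Polynomial ℝ) (hL : IsEhrhartPoly P L) (hdeg : L.natDegree = n)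
    (hroots : ∀ z ∈ (L.map (algebraMap ℝ ℂ)).roots, z.re = -1 / 2)
    (i : ℕ) (hi : i ≤ n) :
    L.coeff i ≤ 2 ^ i * (n.choose i : ℝ) := by
  have hnorm (z) (hz : z ∈ (L.map (algebraMap ℝ ℂ)).roots) : 1 / 2 ≤ ‖z‖ := by
    simpa [hroots z hz, abs_div] using z.abs_re_le_norm
  exact hdeg ▸ (le_abs_self _).trans (Wills_inequalities_of_roots_real_part_general hP
    (hfull.mono interior_subset) hL hnorm i)
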